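/- Let 0 < m < L and α > 0, and set ρ_GD = max(1−αm, αL−1). Let M be the sector IQC matrix with C = I (the n×n identity): M = [[−2Lm I, (L+m)I],[(L+m)I, −2I]]. If ρ ≥ ρ_GD, then the triple (I, −αI, M) is ρ-hyperstable. -/

import Mathlib

/-!
Write `σ(x,u) = -2Lm‖x‖² + 2(L+m)⟪x,u⟫ - 2‖u‖²` for the supply rate. The function `‖x‖²` is a
storage function: there is a multiplier `l ≥ 0` with `‖x - αu‖² + l σ(x,u) ≤ ρ² ‖x‖²` for all
`x, u` (`exists_multiplier`). Dividing by `ρ^(2(k+1))` and telescoping along a trajectory, the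
weighted sum of the `σ` terms has the sign given by the IQC, so `‖x k‖ ≤ ρ^k ‖x 0‖`, that is,
hyperstability holds with constant `1`.

The multiplier comes from tangency: for `u = t x` the inequality bounds a quadratic in `t` which at
`t = m` and `t = L` equals `(1-αm)²` and `(αL-1)²` whatever `l` is. The choice of `l` places its
critical point at the endpoint with the larger value, and with this `l` the quadratic is concave.
-/

open Matrix Filter RealInnerProductSpace
open scoped ComplexOrder


/-- The action of a real matrix on Euclidean space. -/
noncomputable def mulVecE {ι κ : Type*} [Fintype ι] [Fintype κ] [DecidableEq κ]
    (A : Matrix ι κ ℝ) (v : EuclideanSpace ℝ κ) : EuclideanSpace ℝ ι :=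
  Matrix.toEuclideanLin A v

/-- `(x,u) ∈ B(A,B)`: trajectories of the LTI system `x(k+1) = A x(k) + B u(k)`. -/
def IsTraj {ι κ : Type*} [Fintype ι] [Fintype κ] [DecidableEq ι] [DecidableEq κ]
    (A : Matrix ι ι ℝ) (B : Matrix ι κ ℝ)
    (x : ℕ → EuclideanSpace ℝ ι) (u : ℕ → EuclideanSpace ℝ κ) : Prop :=
  ∀ k, x (k + 1) = mulVecE A (x k) + mulVecE B (u k)

/-- `(x,u) ∈ IQC(M,ρ)` for `M = [[Q, Sᵀ],[S, R]]`: the hard ρ-integral quadratic constraint. -/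
def SatIQC {ι κ : Type*} [Fintype ι] [Fintype κ] [DecidableEq ι] [DecidableEq κ]
    (Q : Matrix ι ι ℝ) (S : Matrix κ ι ℝ) (R : Matrix κ κ ℝ) (ρ : ℝ)
    (x : ℕ → EuclideanSpace ℝ ι) (u : ℕ → EuclideanSpace ℝ κ) : Prop :=
  ∀ N : ℕ, 0 ≤ ∑ k ∈ Finset.range (N + 1), (ρ ^ (2 * k))⁻¹ *
    (⟪mulVecE Q (x k), x k⟫ + 2 * ⟪mulVecE S (x k), u k⟫ + ⟪mulVecE R (u k), u k⟫)

/-- The triple `(A,B,M)`, `M = [[Q, Sᵀ],[S, R]]`, is ρ-hyperstable. -/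
def Hyperstable {ι κ : Type*} [Fintype ι] [Fintype κ] [DecidableEq ι] [DecidableEq κ]
    (A : Matrix ι ι ℝ) (B : Matrix ι κ ℝ)
    (Q : Matrix ι ι ℝ) (S : Matrix κ ι ℝ) (R : Matrix κ κ ℝ) (ρ : ℝ) : Prop :=
  ∃ c > 0, ∀ (x : ℕ → EuclideanSpace ℝ ι) (u : ℕ → EuclideanSpace ℝ κ),
    IsTraj A B x u → SatIQC Q S R ρ x u → ∀ k, ‖x k‖ ≤ c * ρ ^ k * ‖x 0‖

/-- The triple `(A,B,M)`, `M = [[Q, Sᵀ],[S, R]]`, is ρ-minimally stable. -/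
def MinStable {ι κ : Type*} [Fintype ι] [Fintype κ] [DecidableEq ι] [DecidableEq κ]
    (A : Matrix ι ι ℝ) (B : Matrix ι κ ℝ)
    (Q : Matrix ι ι ℝ) (S : Matrix κ ι ℝ) (R : Matrix κ κ ℝ) (ρ : ℝ) : Prop :=
  ∀ x₀ : EuclideanSpace ℝ ι, ∃ (x : ℕ → EuclideanSpace ℝ ι) (u : ℕ → EuclideanSpace ℝ κ),
    IsTraj A B x u ∧ SatIQC Q S R ρ x u ∧ x 0 = x₀ ∧
    Tendsto (fun k => (ρ ^ k)⁻¹ • x k) atTop (nhds 0)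

/-- A square real matrix is ρ-Schur if all its complex eigenvalues lie in the open disk of
radius ρ. -/
def IsSchur {ι : Type*} [Fintype ι] [DecidableEq ι] (ρ : ℝ) (A : Matrix ι ι ℝ) : Prop :=
  ∀ z ∈ spectrum ℂ (A.map (Complex.ofReal ·)), ‖z‖ < ρ

/-- The transfer function `H(z) = C (zI - A)⁻¹ B`. -/
noncomputable def transferH {d n : ℕ} (A : Matrix (Fin d) (Fin d) ℝ)
    (B : Matrix (Fin d) (Fin n) ℝ) (C : Matrix (Fin n) (Fin d) ℝ) (z : ℂ) :
    Matrix (Fin n) (Fin n) ℂ :=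
  (C.map (Complex.ofReal ·)) *
    (z • (1 : Matrix (Fin d) (Fin d) ℂ) - A.map (Complex.ofReal ·))⁻¹ *
    (B.map (Complex.ofReal ·))

lemma mulVecE_smul_one {n : ℕ} (a : ℝ) (v : EuclideanSpace ℝ (Fin n)) :
    mulVecE (a • (1 : Matrix (Fin n) (Fin n) ℝ)) v = a • v := by
  simp [mulVecE]

lemma mulVecE_one {n : ℕ} (v : EuclideanSpace ℝ (Fin n)) :
    mulVecE (1 : Matrix (Fin n) (Fin n) ℝ) v = v := by
  simp [mulVecE]

/-- The dissipation inequality with storage function `‖x‖²`. -/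
lemma exists_multiplier {E : Type*} [NormedAddCommGroup E] [InnerProductSpace ℝ E]
    (m L α ρ : ℝ) (hmL : m < L) (hα : 0 < α)
    (h₁ : 1 - α * m ≤ ρ) (h₂ : α * L - 1 ≤ ρ) :
    ∃ l : ℝ, 0 ≤ l ∧ ∀ x u : E, ‖x - α • u‖ ^ 2 +
      l * (-(2 * L * m) * ‖x‖ ^ 2 + 2 * ((L + m) * ⟪x, u⟫) + -2 * ‖u‖ ^ 2) ≤ ρ ^ 2 * ‖x‖ ^ 2 := by
  have hd : 0 < L - m := sub_pos.2 hmL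
  have hpos : 0 < α * (L - m) := mul_pos hα hd
  have expand : ∀ (t : ℝ) (y z : E),
      ‖y - t • z‖ ^ 2 = ‖y‖ ^ 2 - 2 * t * ⟪y, z⟫ + t ^ 2 * ‖z‖ ^ 2 := by
    intro t y z
    rw [norm_sub_sq_real, inner_smul_right, norm_smul, mul_pow, Real.norm_eq_abs, sq_abs]
    ring
  rcases le_total (α * (L + m)) 2 with h | h
  -- Small steps: the larger value is at `t = m`, and the deficit is a multiple of `‖u - m x‖²`.
  · obtain ⟨l, hl⟩ : ∃ l : ℝ, l * (L - m) = α * (1 - α * m) :=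
      ⟨α * (1 - α * m) / (L - m), div_mul_cancel₀ _ hd.ne'⟩
    have hl2 : 0 ≤ 2 * l - α ^ 2 := by
      refine nonneg_of_mul_nonneg_left (b := L - m) ?_ hd
      have : (2 * l - α ^ 2) * (L - m) = α * (2 - α * (L + m)) := by linear_combination 2 * hl
      rw [this]
      exact mul_nonneg hα.le (by linarith)
    refine ⟨l, by nlinarith [sq_nonneg α], fun x u => ?_⟩
    have hs : (1 - α * m) ^ 2 ≤ ρ ^ 2 := pow_le_pow_left₀ (by linarith) h₁ 2
    have hx := mul_le_mul_of_nonneg_right hs (sq_nonneg ‖x‖)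
    have hn := mul_nonneg hl2 (sq_nonneg ‖u - m • x‖)
    rw [expand, real_inner_comm] at hn
    rw [expand]
    have e : ‖x‖ ^ 2 - 2 * α * ⟪x, u⟫ + α ^ 2 * ‖u‖ ^ 2 +
        l * (-(2 * L * m) * ‖x‖ ^ 2 + 2 * ((L + m) * ⟪x, u⟫) + -2 * ‖u‖ ^ 2) =
        (1 - α * m) ^ 2 * ‖x‖ ^ 2 -
          (2 * l - α ^ 2) * (‖u‖ ^ 2 - 2 * m * ⟪x, u⟫ + m ^ 2 * ‖x‖ ^ 2) := by
      linear_combination (2 * ⟪x, u⟫ - 2 * m * ‖x‖ ^ 2) * hl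
    linarith
  -- Large steps: the larger value is at `t = L`, and the deficit is a multiple of `‖u - L x‖²`.
  · obtain ⟨l, hl⟩ : ∃ l : ℝ, l * (L - m) = α * (α * L - 1) :=
      ⟨α * (α * L - 1) / (L - m), div_mul_cancel₀ _ hd.ne'⟩
    have hl2 : 0 ≤ 2 * l - α ^ 2 := by
      refine nonneg_of_mul_nonneg_left (b := L - m) ?_ hd
      have : (2 * l - α ^ 2) * (L - m) = α * (α * (L + m) - 2) := by linear_combination 2 * hl
      rw [this]
      exact mul_nonneg hα.le (by linarith)
    refine ⟨l, by nlinarith [sq_nonneg α], fun x u => ?_⟩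
    have hs : (α * L - 1) ^ 2 ≤ ρ ^ 2 := pow_le_pow_left₀ (by linarith) h₂ 2
    have hx := mul_le_mul_of_nonneg_right hs (sq_nonneg ‖x‖)
    have hn := mul_nonneg hl2 (sq_nonneg ‖u - L • x‖)
    rw [expand, real_inner_comm] at hn
    rw [expand]
    have e : ‖x‖ ^ 2 - 2 * α * ⟪x, u⟫ + α ^ 2 * ‖u‖ ^ 2 +
        l * (-(2 * L * m) * ‖x‖ ^ 2 + 2 * ((L + m) * ⟪x, u⟫) + -2 * ‖u‖ ^ 2) =
        (α * L - 1) ^ 2 * ‖x‖ ^ 2 -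
          (2 * l - α ^ 2) * (‖u‖ ^ 2 - 2 * L * ⟪x, u⟫ + L ^ 2 * ‖x‖ ^ 2) := by
      linear_combination (2 * L * ‖x‖ ^ 2 - 2 * ⟪x, u⟫) * hl
    linarith

/-- Telescoping of a dissipation inequality `V (k+1) + l s k ≤ ρ² V k`. -/
lemma telescope_dissipation (V s : ℕ → ℝ) (l ρ : ℝ) (hρ : 0 < ρ)
    (h : ∀ k, V (k + 1) + l * s k ≤ ρ ^ 2 * V k) (N : ℕ) :
    V N + l * ρ ^ (2 * N) * (ρ ^ 2)⁻¹ * ∑ k ∈ Finset.range N, (ρ ^ (2 * k))⁻¹ * s k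
      ≤ ρ ^ (2 * N) * V 0 := by
  induction N with
  | zero => simp
  | succ N ih =>
    have h1 := mul_le_mul_of_nonneg_left ih (sq_nonneg ρ)
    have h2 := h N
    rw [Finset.sum_range_succ]
    have e : l * ρ ^ (2 * (N + 1)) * (ρ ^ 2)⁻¹ *
        (∑ k ∈ Finset.range N, (ρ ^ (2 * k))⁻¹ * s k + (ρ ^ (2 * N))⁻¹ * s N) =
        ρ ^ 2 * (l * ρ ^ (2 * N) * (ρ ^ 2)⁻¹ * ∑ k ∈ Finset.range N, (ρ ^ (2 * k))⁻¹ * s k)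
          + l * s N := by
      rw [show 2 * (N + 1) = 2 * N + 2 by ring, pow_add]
      field_simp
    have e2 : ρ ^ (2 * (N + 1)) * V 0 = ρ ^ 2 * (ρ ^ (2 * N) * V 0) := by ring
    rw [e, e2]
    linarith

/-- **Lemma 2.13 (hyperstability of the LTI system underlying gradient descent).**
Let `0 < m < L`, `α > 0`, `ρ_GD = max (1-αm) (αL-1)`, and let `M` be the sector IQC
matrix with `C = I`, i.e. `M = [[-2Lm I, (L+m)I],[(L+m)I, -2I]]`.  If `ρ ≥ ρ_GD`, then
`(I, -αI, M)` is ρ-hyperstable. -/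
theorem stmt_10 {n : ℕ} (m L α ρ : ℝ) (hm : 0 < m) (hmL : m < L) (hα : 0 < α)
    (hρ : max (1 - α * m) (α * L - 1) ≤ ρ) :
    Hyperstable (1 : Matrix (Fin n) (Fin n) ℝ) ((-α) • (1 : Matrix (Fin n) (Fin n) ℝ))
      ((-(2 * L * m)) • (1 : Matrix (Fin n) (Fin n) ℝ))
      ((L + m) • (1 : Matrix (Fin n) (Fin n) ℝ))
      ((-2 : ℝ) • (1 : Matrix (Fin n) (Fin n) ℝ)) ρ := by
  obtain ⟨h₁, h₂⟩ := max_le_iff.1 hρ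
  have hρ0 : 0 < ρ := by nlinarith [mul_pos hα (sub_pos.2 hmL)]
  obtain ⟨l, hl, hdiss⟩ :=
    exists_multiplier (E := EuclideanSpace ℝ (Fin n)) m L α ρ hmL hα h₁ h₂
  refine ⟨1, one_pos, fun x u hx hu k => ?_⟩
  simp only [IsTraj, mulVecE_smul_one, mulVecE_one] at hx
  simp only [SatIQC, mulVecE_smul_one, real_inner_smul_left, real_inner_self_eq_norm_sq] at hu
  have key := telescope_dissipation (fun k => ‖x k‖ ^ 2) _ l ρ hρ0 (fun k => by
    have := hdiss (x k) (u k)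
    rwa [show x k - α • u k = x (k + 1) by rw [hx k, neg_smul, sub_eq_add_neg]] at this) k
  have hsum : 0 ≤ ∑ j ∈ Finset.range k, (ρ ^ (2 * j))⁻¹ *
      (-(2 * L * m) * ‖x j‖ ^ 2 + 2 * ((L + m) * ⟪x j, u j⟫) + -2 * ‖u j‖ ^ 2) := by
    cases k with
    | zero => simp
    | succ k => exact hu k
  have hs : 0 ≤ l * ρ ^ (2 * k) * (ρ ^ 2)⁻¹ := by positivity
  have hfin : ‖x k‖ ^ 2 ≤ (1 * ρ ^ k * ‖x 0‖) ^ 2 := by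
    have := mul_nonneg hs hsum
    have e : (1 * ρ ^ k * ‖x 0‖) ^ 2 = ρ ^ (2 * k) * ‖x 0‖ ^ 2 := by ring
    rw [e]
    linarith
  exact (sq_le_sq₀ (norm_nonneg _) (by positivity)).1 hfin
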